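/- Let A : ℝ → ℂ^{d×d} be real analytic and 1-periodic with rank A(x) ≤ 1 for all x, and let α ∈ ℝ be such that L₁(α,A) = −∞. Then there exist a real analytic 1-periodic function c : ℝ → ℂ and a real analytic 1-periodic unitary-valued function U : ℝ → U(d) such that U(x+α)* A(x) U(x) is the matrix whose only possibly nonzero entry is c(x) in position (d−1, d); i.e. the conjugated cocycle is the direct sum of a zero block and the 2×2 block [[0, c(x)], [0, 0]]. -/

import Mathlib

open MeasureTheory Filter Topology

/-- Iterates of the one-frequency cocycle: `A_n(x) = A(x+(n-1)α) ⋯ A(x+α) A(x)`. -/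
noncomputable def matIter {d : ℕ} (α : ℝ) (A : ℝ → Matrix (Fin d) (Fin d) ℂ) :
    ℕ → ℝ → Matrix (Fin d) (Fin d) ℂ
  | 0, _ => 1
  | n + 1, x => matIter α A n (x + α) * A x

/-- The `k`-th largest singular value of a matrix, `1 ≤ k ≤ d`, via the
Courant–Fischer max–min characterization:
`σ_k(M) = max {t | ∃ V of dim k, ∀ v ∈ V, t‖v‖ ≤ ‖Mv‖}`. -/
noncomputable def singVal {d : ℕ} (k : ℕ) (M : Matrix (Fin d) (Fin d) ℂ) : ℝ :=
  sSup {t : ℝ | ∃ V : Submodule ℂ (EuclideanSpace ℂ (Fin d)),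
    Module.finrank ℂ V = k ∧ ∀ v ∈ V, t * ‖v‖ ≤ ‖(Matrix.toEuclideanLin M) v‖}

/-- The integral `∫ ln(g) dμ`, valued in `[-∞,∞]` (here `ln 0 = -∞`); by convention it is `-∞`
whenever the negative part of `ln g` is not `μ`-integrable. -/
noncomputable def elogIntegral {X : Type*} [MeasurableSpace X] (μ : Measure X) (g : X → ℝ) :
    EReal :=
  if μ {x | g x = 0} = 0 ∧ (∫⁻ x, ENNReal.ofReal (-Real.log (g x)) ∂μ) ≠ ⊤ then
    (∫⁻ x, ENNReal.ofReal (Real.log (g x)) ∂μ).toEReal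
      - (∫⁻ x, ENNReal.ofReal (-Real.log (g x)) ∂μ).toEReal
  else ⊥

/-- `L_k(α, A) = L`: the `k`-th Lyapunov exponent of the one-frequency cocycle `(α, A)`
is `L ∈ [-∞,∞)`, i.e. `L = lim_n (1/n) ∫₀¹ ln σ_k(A_n(x)) dx`. -/
def HasLyapunovExp {d : ℕ} (α : ℝ) (A : ℝ → Matrix (Fin d) (Fin d) ℂ) (k : ℕ) (L : EReal) :
    Prop :=
  Tendsto (fun n : ℕ => (((n : ℝ)⁻¹ : ℝ) : EReal)
      * elogIntegral (volume.restrict (Set.Ioc (0:ℝ) 1))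
          (fun x => singVal k (matIter α A n x)))
    atTop (𝓝 L)

/-- A real analytic, 1-periodic matrix valued map. -/
def AnalyticPeriodicMat {d e : ℕ} (A : ℝ → Matrix (Fin d) (Fin e) ℂ) : Prop :=
  Function.Periodic A 1 ∧ ∀ (x : ℝ) (i : Fin d) (j : Fin e), AnalyticAt ℝ (fun t => A t i j) x

/-!
Zeros of an analytic map on the circle can be divided out with factors `e^{2πix} - e^{2πia}`, so `A`
factors as `A = k u v*` with `k` an analytic periodic scalar and `u`, `v` analytic periodic unit
vectors. Hence
`A_{n+1}(x) = k(x + nα) ∏_{i < n} h(x + iα) u(x + nα) v(x)*`, `h(x) = k(x) ⟨v(x + α), u(x)⟩`,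
and if `h` is not identically zero then `L₁` is the mean of `ln |h|`, which is finite. So
`L₁ = -∞` forces `u(x - α)` and `v(x)` to be orthogonal, and any extension of this pair to an
analytic periodic orthonormal frame provides the columns of `U(x)`.
-/

open scoped ContDiff Matrix InnerProductSpace

section EntireAnalytic

variable {𝕜 E : Type*} [NontriviallyNormedField 𝕜] [NormedAddCommGroup E] [NormedSpace 𝕜 E]
  {f g : 𝕜 → E}

theorem eventually_codiscrete_ne_zero [PreconnectedSpace 𝕜] (hf : AnalyticOnNhd 𝕜 f Set.univ)
    (hf₀ : f ≠ 0) : ∀ᶠ x in codiscrete 𝕜, f x ≠ 0 :=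
  (hf.eqOn_zero_or_eventually_ne_zero_of_preconnected isPreconnected_univ).resolve_left
    fun h => hf₀ (funext fun x => h (Set.mem_univ x))

theorem meromorphicOrderAt_ne_top_of_ne_zero [PreconnectedSpace 𝕜]
    (hf : AnalyticOnNhd 𝕜 f Set.univ) (hf₀ : f ≠ 0) (x : 𝕜) : meromorphicOrderAt f x ≠ ⊤ := by
  rw [meromorphicOrderAt_ne_top_iff_eventually_ne_zero (hf x trivial).meromorphicAt]
  simpa [Filter.Eventually] using mem_codiscrete.1 (eventually_codiscrete_ne_zero hf hf₀) x

theorem exists_analytic_of_meromorphicOrderAt_eq_zero [CompleteSpace E]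
    (hf : ∀ x, MeromorphicAt f x) (hord : ∀ x, meromorphicOrderAt f x = 0) :
    ∃ F : 𝕜 → E, AnalyticOnNhd 𝕜 F Set.univ ∧ (∀ x, F x ≠ 0) ∧ ∀ x, F =ᶠ[𝓝[≠] x] f := by
  have hfm : MeromorphicOn f Set.univ := fun x _ => hf x
  have hnf (x : 𝕜) : MeromorphicNFAt (toMeromorphicNFOn f Set.univ) x :=
    meromorphicNFOn_toMeromorphicNFOn f Set.univ trivial
  have horder (x : 𝕜) : meromorphicOrderAt (toMeromorphicNFOn f Set.univ) x = 0 :=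
    (meromorphicOrderAt_toMeromorphicNFOn hfm trivial).trans (hord x)
  exact ⟨toMeromorphicNFOn f Set.univ,
    fun x _ => (hnf x).meromorphicOrderAt_nonneg_iff_analyticAt.1 (horder x).ge,
    fun x => (hnf x).meromorphicOrderAt_eq_zero_iff.1 (horder x),
    fun x => hfm.toMeromorphicNFOn_eq_self_on_nhdsNE trivial⟩

variable {𝕜' : Type*} [NontriviallyNormedField 𝕜'] [NormedAlgebra 𝕜 𝕜'] [NormedSpace 𝕜' E]
  {k : 𝕜 → 𝕜'}

theorem smul_left_cancel_of_analytic [PreconnectedSpace 𝕜] (hk : AnalyticOnNhd 𝕜 k Set.univ)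
    (hk₀ : k ≠ 0) (hf : AnalyticOnNhd 𝕜 f Set.univ) (hg : AnalyticOnNhd 𝕜 g Set.univ)
    (h : ∀ x, k x • f x = k x • g x) : f = g := by
  have hsmul : ∀ x ∈ Set.univ, k x • (f x - g x) = 0 := fun x _ => by rw [smul_sub, h, sub_self]
  rcases hk.eq_zero_or_eq_zero_of_smul_eq_zero (hf.sub hg) hsmul isPreconnected_univ with hk' | hfg
  · exact absurd (funext fun x => hk' x trivial) hk₀
  · exact funext fun x => sub_eq_zero.1 (hfg x trivial)

theorem exists_analytic_eq_smul_of_meromorphicOrderAt_eq [IsScalarTower 𝕜 𝕜' E] [CompleteSpace E]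
    (hk : AnalyticOnNhd 𝕜 k Set.univ) (hg : AnalyticOnNhd 𝕜 g Set.univ)
    (hord : ∀ x, meromorphicOrderAt k x = meromorphicOrderAt g x)
    (hfin : ∀ x, meromorphicOrderAt g x ≠ ⊤) :
    ∃ G : 𝕜 → E, AnalyticOnNhd 𝕜 G Set.univ ∧ (∀ x, G x ≠ 0) ∧ ∀ x, g x = k x • G x := by
  have hkm (x : 𝕜) : MeromorphicAt k x := (hk x trivial).meromorphicAt
  have hgm (x : 𝕜) : MeromorphicAt g x := (hg x trivial).meromorphicAt
  have hquot (x : 𝕜) : meromorphicOrderAt (k⁻¹ • g) x = 0 := by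
    rw [meromorphicOrderAt_smul (hkm x).inv (hgm x), meromorphicOrderAt_inv, hord,
      LinearOrderedAddCommGroupWithTop.neg_add_cancel_of_ne_top (hfin x)]
  obtain ⟨G, hG, hG₀, hG_eq⟩ :=
    exists_analytic_of_meromorphicOrderAt_eq_zero (fun x => (hkm x).inv.smul (hgm x)) hquot
  refine ⟨G, hG, hG₀, fun x => ?_⟩
  have hk_ne : ∀ᶠ y in 𝓝[≠] x, k y ≠ 0 :=
    (meromorphicOrderAt_ne_top_iff_eventually_ne_zero (hkm x)).1 ((hord x).trans_ne (hfin x))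
  have heq : g =ᶠ[𝓝[≠] x] k • G := by
    filter_upwards [hk_ne, hG_eq x] with y hky hGy
    simp [hGy, smul_inv_smul₀ hky]
  exact ((hg x trivial).continuousAt.eventuallyEq_nhds_iff_eventuallyEq_nhdsNE
    ((hk x trivial).smul (hG x trivial)).continuousAt).1 heq |>.eq_of_nhds

end EntireAnalytic

theorem ae_ne_zero_of_analytic {E : Type*} [NormedAddCommGroup E] [NormedSpace ℝ E] {f : ℝ → E}
    (hf : AnalyticOnNhd ℝ f Set.univ) (hf₀ : f ≠ 0) : ∀ᵐ x, f x ≠ 0 := by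
  have h := ae_restrict_le_codiscreteWithin (μ := volume) MeasurableSet.univ
    (eventually_codiscrete_ne_zero hf hf₀)
  rwa [Measure.restrict_univ] at h

/-- An analytic map on the circle `ℝ / ℤ`, encoded as a real analytic map on `ℝ` of period `1`. -/
structure PeriodicAnalytic {E : Type*} [NormedAddCommGroup E] [NormedSpace ℝ E] (f : ℝ → E) :
    Prop where
  periodic : Function.Periodic f 1
  analyticAt : ∀ x, AnalyticAt ℝ f x

namespace PeriodicAnalytic

section NormedSpace

variable {E F : Type*} [NormedAddCommGroup E] [NormedSpace ℝ E] [NormedAddCommGroup F]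
  [NormedSpace ℝ F] {f g : ℝ → E}

theorem analyticOnNhd (hf : PeriodicAnalytic f) : AnalyticOnNhd ℝ f Set.univ :=
  fun x _ => hf.analyticAt x

theorem contDiff [CompleteSpace E] (hf : PeriodicAnalytic f) : ContDiff ℝ ω f :=
  hf.analyticOnNhd.contDiff

theorem of_contDiff (hper : Function.Periodic f 1) (hf : ContDiff ℝ ω f) :
    PeriodicAnalytic f :=
  ⟨hper, fun x => (hf.contDiffAt (x := x)).analyticAt⟩

theorem const (c : E) : PeriodicAnalytic fun _ : ℝ => c :=
  ⟨fun _ => rfl, fun _ => analyticAt_const⟩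

theorem sub (hf : PeriodicAnalytic f) (hg : PeriodicAnalytic g) :
    PeriodicAnalytic fun x => f x - g x :=
  ⟨hf.periodic.sub hg.periodic, fun x => (hf.analyticAt x).sub (hg.analyticAt x)⟩

theorem clm_comp (L : E →L[ℝ] F) (hf : PeriodicAnalytic f) : PeriodicAnalytic fun x => L (f x) :=
  ⟨hf.periodic.comp L, fun x => (L.analyticAt (f x)).fun_comp (hf.analyticAt x)⟩

theorem comp_add_const (hf : PeriodicAnalytic f) (a : ℝ) : PeriodicAnalytic fun x => f (x + a) :=
  ⟨hf.periodic.add_const a, fun x =>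
    (hf.analyticAt (x + a)).comp (f := fun y => y + a) (analyticAt_id.add analyticAt_const)⟩

theorem sum {ι : Type*} {s : Finset ι} {f : ι → ℝ → E} (hf : ∀ i ∈ s, PeriodicAnalytic (f i)) :
    PeriodicAnalytic fun x => ∑ i ∈ s, f i x :=
  ⟨fun x => Finset.sum_congr rfl fun i hi => (hf i hi).periodic x,
    fun x => Finset.analyticAt_fun_sum s fun i hi => (hf i hi).analyticAt x⟩

theorem smul {𝕜 : Type*} [NormedField 𝕜] [NormedAlgebra ℝ 𝕜] [NormedSpace 𝕜 E]
    [IsScalarTower ℝ 𝕜 E] {k : ℝ → 𝕜} (hk : PeriodicAnalytic k) (hf : PeriodicAnalytic f) :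
    PeriodicAnalytic fun x => k x • f x :=
  ⟨fun x => by rw [hk.periodic x, hf.periodic x],
    fun x => (hk.analyticAt x).smul (hf.analyticAt x)⟩

end NormedSpace

section Algebra

variable {R : Type*} [NormedCommRing R] [NormedAlgebra ℝ R] {f g : ℝ → R}

theorem mul (hf : PeriodicAnalytic f) (hg : PeriodicAnalytic g) :
    PeriodicAnalytic fun x => f x * g x :=
  ⟨hf.periodic.mul hg.periodic, fun x => (hf.analyticAt x).mul (hg.analyticAt x)⟩

theorem pow (hf : PeriodicAnalytic f) (n : ℕ) : PeriodicAnalytic fun x => f x ^ n :=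
  ⟨fun x => by rw [hf.periodic x], fun x => (hf.analyticAt x).fun_pow n⟩

theorem prod {ι : Type*} {s : Finset ι} {f : ι → ℝ → R} (hf : ∀ i ∈ s, PeriodicAnalytic (f i)) :
    PeriodicAnalytic fun x => ∏ i ∈ s, f i x :=
  ⟨fun x => Finset.prod_congr rfl fun i hi => (hf i hi).periodic x,
    fun x => Finset.analyticAt_fun_prod s fun i hi => (hf i hi).analyticAt x⟩

end Algebra

section InnerProductSpace

variable {E : Type*} [NormedAddCommGroup E] [InnerProductSpace ℂ E] [CompleteSpace E]
  {f g : ℝ → E}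

theorem inner (hf : PeriodicAnalytic f) (hg : PeriodicAnalytic g) :
    PeriodicAnalytic fun x => inner ℂ (f x) (g x) :=
  of_contDiff (fun x => by rw [hf.periodic x, hg.periodic x]) (hf.contDiff.inner ℂ hg.contDiff)

theorem conj {f : ℝ → ℂ} (hf : PeriodicAnalytic f) : PeriodicAnalytic fun x => star (f x) :=
  hf.clm_comp Complex.conjCLE.toContinuousLinearMap

theorem normalize (hf : PeriodicAnalytic f) (hf₀ : ∀ x, f x ≠ 0) :
    PeriodicAnalytic fun x => (‖f x‖⁻¹ : ℝ) • f x :=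
  of_contDiff (fun x => by rw [hf.periodic x])
    (((hf.contDiff.norm ℂ hf₀).inv fun x => norm_ne_zero_iff.2 (hf₀ x)).smul hf.contDiff)

theorem norm (hf : PeriodicAnalytic f) (hf₀ : ∀ x, f x ≠ 0) :
    PeriodicAnalytic fun x => ‖f x‖ :=
  of_contDiff (fun x => by rw [hf.periodic x]) (hf.contDiff.norm ℂ hf₀)

end InnerProductSpace

section Euclidean

variable {ι : Type*} [Fintype ι]

theorem euclidean_iff {f : ℝ → EuclideanSpace ℂ ι} :
    PeriodicAnalytic f ↔ ∀ i, PeriodicAnalytic fun x => f x i := by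
  refine ⟨fun hf i => hf.clm_comp ((EuclideanSpace.proj i : _ →L[ℂ] ℂ).restrictScalars ℝ),
    fun hf => of_contDiff (fun x => ?_) (contDiff_piLp 2 |>.2 fun i => (hf i).contDiff)⟩
  ext i
  exact (hf i).periodic x

end Euclidean

end PeriodicAnalytic

theorem analyticPeriodicMat_iff {d e : ℕ} {A : ℝ → Matrix (Fin d) (Fin e) ℂ} :
    AnalyticPeriodicMat A ↔ ∀ i j, PeriodicAnalytic fun x => A x i j :=
  ⟨fun hA i j => ⟨fun x => by simp only [hA.1 x], fun x => hA.2 x i j⟩,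
    fun hA => ⟨fun x => Matrix.ext fun i j => (hA i j).periodic x,
      fun x i j => (hA i j).analyticAt x⟩⟩

/-- The function `e^{2πix} - e^{2πia}`, which has simple zeros exactly at the points of `a + ℤ`; it
plays on the circle the role of a linear factor. -/
noncomputable def circleFactor (a x : ℝ) : ℂ :=
  Complex.exp (2 * Real.pi * Complex.I * x) - Complex.exp (2 * Real.pi * Complex.I * a)

section circleFactor

variable {a x : ℝ}

theorem hasDerivAt_cexp_two_pi_I_mul (x : ℝ) :
    HasDerivAt (fun y : ℝ => Complex.exp (2 * Real.pi * Complex.I * y))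
      (Complex.exp (2 * Real.pi * Complex.I * x) * (2 * Real.pi * Complex.I)) x := by
  simpa using (((hasDerivAt_id (x : ℂ)).const_mul (2 * Real.pi * Complex.I)).cexp).comp_ofReal

theorem periodicAnalytic_cexp_two_pi_I_mul :
    PeriodicAnalytic fun y : ℝ => Complex.exp (2 * Real.pi * Complex.I * y) := by
  refine .of_contDiff (fun x => ?_) (contDiff_const.mul Complex.ofRealCLM.contDiff).cexp
  push_cast
  rw [mul_add, mul_one, Complex.exp_add, Complex.exp_two_pi_mul_I, mul_one]

theorem periodicAnalytic_circleFactor (a : ℝ) : PeriodicAnalytic (circleFactor a) :=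
  periodicAnalytic_cexp_two_pi_I_mul.sub (.const _)

theorem circleFactor_eq_zero_iff : circleFactor a x = 0 ↔ ∃ n : ℤ, x = a + n := by
  rw [circleFactor, sub_eq_zero, Complex.exp_eq_exp_iff_exists_int]
  refine exists_congr fun n => ?_
  rw [mul_comm (n : ℂ), ← mul_add, mul_right_inj' Complex.two_pi_I_ne_zero]
  norm_cast

theorem circleFactor_eq_zero_iff_of_mem_Ico (ha : a ∈ Set.Ico (0 : ℝ) 1)
    (hx : x ∈ Set.Ico (0 : ℝ) 1) : circleFactor a x = 0 ↔ x = a := by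
  refine circleFactor_eq_zero_iff.trans ⟨?_, fun h => ⟨0, by simpa using h⟩⟩
  rintro ⟨n, rfl⟩
  have hlt : (-1 : ℝ) < n ∧ (n : ℝ) < 1 := ⟨by linarith [ha.2, hx.1], by linarith [ha.1, hx.2]⟩
  have hn : n = 0 := by
    have : -1 < n ∧ n < 1 := by exact_mod_cast hlt
    omega
  simp [hn]

theorem meromorphicOrderAt_circleFactor_self (a : ℝ) :
    meromorphicOrderAt (circleFactor a) a = 1 := by
  rw [((periodicAnalytic_circleFactor a).analyticAt a).meromorphicOrderAt_eq]
  have horder : analyticOrderAt (circleFactor a) a = 1 := by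
    refine (periodicAnalytic_cexp_two_pi_I_mul.analyticAt a)
      |>.analyticOrderAt_sub_eq_one_of_deriv_ne_zero ?_
    rw [(hasDerivAt_cexp_two_pi_I_mul a).deriv]
    exact mul_ne_zero (Complex.exp_ne_zero _) Complex.two_pi_I_ne_zero
  rw [horder]
  rfl

theorem meromorphicOrderAt_circleFactor (ha : a ∈ Set.Ico (0 : ℝ) 1)
    (hx : x ∈ Set.Ico (0 : ℝ) 1) :
    meromorphicOrderAt (circleFactor a) x = if x = a then 1 else 0 := by
  split_ifs with hxa
  · rw [hxa, meromorphicOrderAt_circleFactor_self]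
  · have han := (periodicAnalytic_circleFactor a).analyticAt x
    rw [← circleFactor_eq_zero_iff_of_mem_Ico ha hx] at hxa
    rw [han.meromorphicOrderAt_eq, han.analyticOrderAt_eq_zero.2 hxa]
    rfl

theorem meromorphicOrderAt_prod_circleFactor_pow {s : Finset ℝ} (n : ℝ → ℕ)
    (hs : ∀ a ∈ s, a ∈ Set.Ico (0 : ℝ) 1) (hx : x ∈ Set.Ico (0 : ℝ) 1) :
    meromorphicOrderAt (fun y => ∏ a ∈ s, circleFactor a y ^ n a) x
      = if x ∈ s then (n x : WithTop ℤ) else 0 := by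
  have hmer (a : ℝ) : MeromorphicAt (circleFactor a) x :=
    ((periodicAnalytic_circleFactor a).analyticAt x).meromorphicAt
  rw [meromorphicOrderAt_fun_prod fun a _ => (hmer a).fun_pow (n a)]
  calc ∑ a ∈ s, meromorphicOrderAt (fun y => circleFactor a y ^ n a) x
      = ∑ a ∈ s, if x = a then (n a : WithTop ℤ) else 0 := by
        refine Finset.sum_congr rfl fun a ha => ?_
        rw [fun_meromorphicOrderAt_pow (hmer a), meromorphicOrderAt_circleFactor (hs a ha) hx,
          mul_ite, mul_one, mul_zero]
    _ = if x ∈ s then (n x : WithTop ℤ) else 0 := Finset.sum_ite_eq s x _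

end circleFactor

namespace PeriodicAnalytic

variable {E : Type*} [NormedAddCommGroup E] [NormedSpace ℝ E] {f g : ℝ → E}

theorem meromorphicOrderAt_fract (hf : PeriodicAnalytic f) (x : ℝ) :
    meromorphicOrderAt f (Int.fract x) = meromorphicOrderAt f x := by
  rw [Int.fract, sub_eq_add_neg, ← meromorphicOrderAt_comp_add_const_eq_meromorphicOrderAt]
  congr 1
  ext y
  simpa [sub_eq_add_neg] using hf.periodic.sub_int_mul_eq ⌊x⌋ (x := y)

theorem finite_zeros_Ico (hf : PeriodicAnalytic f) (hf₀ : f ≠ 0) :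
    {x ∈ Set.Ico (0 : ℝ) 1 | f x = 0}.Finite := by
  have hcod : {x | f x ≠ 0} ∈ codiscreteWithin (Set.Icc (0 : ℝ) 1) :=
    codiscreteWithin_mono (Set.subset_univ _) (eventually_codiscrete_ne_zero hf.analyticOnNhd hf₀)
  refine (isCompact_Icc.finite_sdiff_of_mem_codiscreteWithin hcod).subset ?_
  exact fun x hx => ⟨Set.Ico_subset_Icc_self hx.1, fun h => h hx.2⟩

theorem exists_scalar_meromorphicOrderAt_eq (hg : PeriodicAnalytic g) (hg₀ : g ≠ 0) :
    ∃ k : ℝ → ℂ, PeriodicAnalytic k ∧ ∀ x, meromorphicOrderAt k x = meromorphicOrderAt g x := by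
  have hfin := hg.finite_zeros_Ico hg₀
  let k : ℝ → ℂ := fun x => ∏ a ∈ hfin.toFinset, circleFactor a x ^ analyticOrderNatAt g a
  have hk : PeriodicAnalytic k := .prod fun a _ => (periodicAnalytic_circleFactor a).pow _
  refine ⟨k, hk, fun x => ?_⟩
  rw [← hk.meromorphicOrderAt_fract, ← hg.meromorphicOrderAt_fract]
  have hx : Int.fract x ∈ Set.Ico (0 : ℝ) 1 := ⟨Int.fract_nonneg x, Int.fract_lt_one x⟩
  generalize Int.fract x = y at hx
  have hgy := hg.analyticAt y
  have hord : analyticOrderAt g y ≠ ⊤ := fun h =>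
    meromorphicOrderAt_ne_top_of_ne_zero hg.analyticOnNhd hg₀ y
      (by simp [hgy.meromorphicOrderAt_eq, h])
  rw [meromorphicOrderAt_prod_circleFactor_pow _ (fun a ha => (hfin.mem_toFinset.1 ha).1) hx,
    hgy.meromorphicOrderAt_eq]
  split_ifs with hy
  · rw [← Nat.cast_analyticOrderNatAt hord]; rfl
  · have : g y ≠ 0 := fun h => hy (hfin.mem_toFinset.2 ⟨hx, h⟩)
    rw [hgy.analyticOrderAt_eq_zero.2 this]; rfl

theorem exists_eq_smul_ne_zero {E : Type*} [NormedAddCommGroup E] [NormedSpace ℂ E]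
    [CompleteSpace E] {g : ℝ → E} (hg : PeriodicAnalytic g) (hg₀ : g ≠ 0) :
    ∃ (k : ℝ → ℂ) (G : ℝ → E), PeriodicAnalytic k ∧ PeriodicAnalytic G ∧ (∀ x, G x ≠ 0) ∧
      ∀ x, g x = k x • G x := by
  obtain ⟨k, hk, hord⟩ := hg.exists_scalar_meromorphicOrderAt_eq hg₀
  obtain ⟨G, hG, hG₀, hgG⟩ := exists_analytic_eq_smul_of_meromorphicOrderAt_eq hk.analyticOnNhd
    hg.analyticOnNhd hord (meromorphicOrderAt_ne_top_of_ne_zero hg.analyticOnNhd hg₀)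
  have hk₀ : k ≠ 0 := fun h => hg₀ (funext fun x => by simp [hgG x, h])
  have hshift : AnalyticOnNhd ℝ (fun x => G (x + 1)) Set.univ := fun x _ =>
    (hG (x + 1) trivial).comp (f := fun y => y + 1) (analyticAt_id.add analyticAt_const)
  have hper : (fun x => G (x + 1)) = G := by
    refine smul_left_cancel_of_analytic hk.analyticOnNhd hk₀ hshift hG fun x => ?_
    rw [← hgG, ← hk.periodic, ← hgG, hg.periodic]
  exact ⟨k, G, hk, ⟨congrFun hper, fun x => hG x trivial⟩, hG₀, hgG⟩

theorem exists_eq_smul_unit {E : Type*} [NormedAddCommGroup E] [InnerProductSpace ℂ E]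
    [CompleteSpace E] {g : ℝ → E} (hg : PeriodicAnalytic g) (hg₀ : g ≠ 0) :
    ∃ (k : ℝ → ℂ) (u : ℝ → E), PeriodicAnalytic k ∧ PeriodicAnalytic u ∧ k ≠ 0 ∧
      (∀ x, ‖u x‖ = 1) ∧ ∀ x, g x = k x • u x := by
  obtain ⟨k, G, hk, hG, hG₀, hgG⟩ := hg.exists_eq_smul_ne_zero hg₀
  refine ⟨fun x => ‖G x‖ • k x, fun x => ‖G x‖⁻¹ • G x, (hG.norm hG₀).smul hk,
    hG.normalize hG₀, fun h => hg₀ (funext fun x => ?_), fun x => ?_, fun x => ?_⟩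
  · have hkx : k x = 0 := by simpa [hG₀ x] using congrFun h x
    simp [hgG x, hkx]
  · rw [norm_smul, norm_inv, norm_norm, inv_mul_cancel₀ (norm_ne_zero_iff.2 (hG₀ x))]
  · rw [hgG x, smul_assoc, smul_comm (k x), smul_inv_smul₀ (norm_ne_zero_iff.2 (hG₀ x))]

end PeriodicAnalytic

section OuterProduct

open Matrix

theorem exists_eq_vecMulVec_of_rank_le_one {K m n : Type*} [Field K] [Finite m] [Fintype n]
    {M : Matrix m n K} (hM : M.rank ≤ 1) {u : m → K} (hu : u ≠ 0)
    (hu_range : u ∈ LinearMap.range M.mulVecLin) : ∃ c : n → K, M = vecMulVec u c := by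
  classical
  have hspan : K ∙ u = LinearMap.range M.mulVecLin :=
    Submodule.eq_of_le_of_finrank_le ((Submodule.span_singleton_le_iff_mem _ _).2 hu_range)
      (hM.trans (finrank_span_singleton hu).ge)
  have hcol (j : n) : ∃ c : K, c • u = M.col j := by
    rw [← Submodule.mem_span_singleton, hspan]
    exact ⟨Pi.single j 1, by simp⟩
  choose c hc using hcol
  refine ⟨c, ?_⟩
  ext i j
  simpa [vecMulVec_apply, mul_comm] using (congrFun (hc j) i).symm

/-- The matrix `u v*` of the rank one operator `w ↦ ⟪v, w⟫ u`, see `toEuclideanCLM_outerProduct`. -/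
def outerProduct {m n : Type*} (u : EuclideanSpace ℂ m) (v : EuclideanSpace ℂ n) :
    Matrix m n ℂ :=
  vecMulVec u.ofLp (star v.ofLp)

variable {l m n : Type*}

theorem outerProduct_apply (u : EuclideanSpace ℂ m) (v : EuclideanSpace ℂ n) (i : m) (j : n) :
    outerProduct u v i j = u i * star (v j) := rfl

theorem outerProduct_mul_outerProduct [Fintype m] (u : EuclideanSpace ℂ l)
    (v w : EuclideanSpace ℂ m) (z : EuclideanSpace ℂ n) :
    outerProduct u v * outerProduct w z = ⟪v, w⟫_ℂ • outerProduct u z := by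
  simp [outerProduct, vecMulVec_mul_vecMulVec, EuclideanSpace.inner_eq_star_dotProduct,
    dotProduct_comm, vecMulVec_smul]

theorem outerProduct_smul_right (u : EuclideanSpace ℂ m) (k : ℂ) (v : EuclideanSpace ℂ n) :
    outerProduct u (k • v) = star k • outerProduct u v := by
  simp [outerProduct, star_smul, vecMulVec_smul]

theorem toEuclideanCLM_outerProduct [Fintype n] [DecidableEq n] (u v : EuclideanSpace ℂ n) :
    toEuclideanCLM (𝕜 := ℂ) (outerProduct u v) = InnerProductSpace.rankOne ℂ u v := by
  ext w i
  simp [outerProduct, vecMulVec_mulVec, EuclideanSpace.inner_eq_star_dotProduct,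
    dotProduct_comm, mul_comm]

theorem eq_outerProduct_conjTranspose_mulVec [Fintype m] [Fintype n] {M : Matrix m n ℂ}
    (hM : M.rank ≤ 1) {u : EuclideanSpace ℂ m} (hu : ‖u‖ = 1)
    (hu_range : u.ofLp ∈ LinearMap.range M.mulVecLin) :
    M = outerProduct u (WithLp.toLp 2 (Mᴴ *ᵥ u.ofLp)) := by
  have hu₀ : u.ofLp ≠ 0 := fun h => by simp [(WithLp.ofLp_eq_zero 2).1 h] at hu
  obtain ⟨c, rfl⟩ := exists_eq_vecMulVec_of_rank_le_one hM hu₀ hu_range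
  have huu : star u.ofLp ⬝ᵥ u.ofLp = 1 := by
    rw [dotProduct_comm, ← EuclideanSpace.inner_eq_star_dotProduct,
      inner_self_eq_norm_sq_to_K, hu]
    simp
  simp [outerProduct, conjTranspose_vecMulVec, vecMulVec_mulVec, huu]

end OuterProduct

namespace PeriodicAnalytic

open Matrix

variable {m n : Type*} [Fintype m] [Fintype n] {A : ℝ → Matrix m n ℂ}

theorem conjTranspose_mulVec (hA : ∀ i j, PeriodicAnalytic fun x => A x i j)
    {u : ℝ → EuclideanSpace ℂ m} (hu : PeriodicAnalytic u) :
    PeriodicAnalytic fun x => WithLp.toLp 2 ((A x)ᴴ *ᵥ (u x).ofLp) :=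
  euclidean_iff.2 fun j => .sum fun i _ => (hA i j).conj.mul (euclidean_iff.1 hu i)

theorem exists_eq_outerProduct_of_rank_le_one (hA : ∀ i j, PeriodicAnalytic fun x => A x i j)
    (hrank : ∀ x, (A x).rank ≤ 1) (hA₀ : A ≠ 0) :
    ∃ (u : ℝ → EuclideanSpace ℂ m) (w : ℝ → EuclideanSpace ℂ n), PeriodicAnalytic u ∧
      PeriodicAnalytic w ∧ (∀ x, ‖u x‖ = 1) ∧ ∀ x, A x = outerProduct (u x) (w x) := by
  classical
  obtain ⟨j, hj⟩ : ∃ j, (fun x => WithLp.toLp 2 ((A x).col j)) ≠ (0 : ℝ → EuclideanSpace ℂ m) := by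
    contrapose! hA₀
    ext x i j
    exact congrArg (fun v : EuclideanSpace ℂ m => v i) (congrFun (hA₀ j) x)
  obtain ⟨h, u, hh, hu, hh₀, hu₁, hcol⟩ :=
    (euclidean_iff.2 fun i => hA i j : PeriodicAnalytic _).exists_eq_smul_unit hj
  have hw := conjTranspose_mulVec hA hu
  refine ⟨u, _, hu, hw, hu₁, fun x => ?_⟩
  ext i j'
  have hentry : PeriodicAnalytic fun x =>
      outerProduct (u x) (WithLp.toLp 2 ((A x)ᴴ *ᵥ (u x).ofLp)) i j' :=
    (euclidean_iff.1 hu i).mul (euclidean_iff.1 hw j').conj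
  refine congrFun (smul_left_cancel_of_analytic hh.analyticOnNhd hh₀ (hA i j').analyticOnNhd
    hentry.analyticOnNhd fun x => ?_) x
  rcases eq_or_ne (h x) 0 with hx | hx
  · simp [hx]
  · have hu_range : (u x).ofLp ∈ LinearMap.range (A x).mulVecLin := by
      refine ⟨(h x)⁻¹ • Pi.single j 1, ?_⟩
      rw [map_smul, mulVecLin_apply, mulVec_single_one, inv_smul_eq_iff₀ hx]
      exact congrArg WithLp.ofLp (hcol x)
    rw [← eq_outerProduct_conjTranspose_mulVec (hrank x) (hu₁ x) hu_range]

theorem exists_eq_smul_outerProduct_of_rank_le_one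
    (hA : ∀ i j, PeriodicAnalytic fun x => A x i j) (hrank : ∀ x, (A x).rank ≤ 1) (hA₀ : A ≠ 0) :
    ∃ (k : ℝ → ℂ) (u : ℝ → EuclideanSpace ℂ m) (v : ℝ → EuclideanSpace ℂ n),
      PeriodicAnalytic k ∧ PeriodicAnalytic u ∧ PeriodicAnalytic v ∧ k ≠ 0 ∧
      (∀ x, ‖u x‖ = 1) ∧ (∀ x, ‖v x‖ = 1) ∧ ∀ x, A x = k x • outerProduct (u x) (v x) := by
  obtain ⟨u, w, hu, hw, hu₁, hAuw⟩ := exists_eq_outerProduct_of_rank_le_one hA hrank hA₀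
  have hw₀ : w ≠ 0 := fun h => hA₀ (funext fun x => by ext; simp [hAuw, outerProduct_apply, h])
  obtain ⟨k, v, hk, hv, hk₀, hv₁, hwv⟩ := hw.exists_eq_smul_unit hw₀
  refine ⟨fun x => star (k x), u, v, hk.conj, hu, hv, fun h => hk₀ (funext fun x => ?_), hu₁, hv₁,
    fun x => ?_⟩
  · simpa using congrFun h x
  · rw [hAuw, hwv, outerProduct_smul_right]

end PeriodicAnalytic

section SingularValue

variable {𝕜 E F : Type*} [NontriviallyNormedField 𝕜] [NormedAddCommGroup E] [NormedSpace 𝕜 E]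
  [NormedAddCommGroup F] [NormedSpace 𝕜 F]

theorem exists_finrank_eq_one_expand_iff_exists_ne_zero {T : E →L[𝕜] F} {t : ℝ} :
    (∃ V : Submodule 𝕜 E, Module.finrank 𝕜 V = 1 ∧ ∀ v ∈ V, t * ‖v‖ ≤ ‖T v‖) ↔
      ∃ v : E, v ≠ 0 ∧ t * ‖v‖ ≤ ‖T v‖ := by
  constructor
  · rintro ⟨V, hV, ht⟩
    obtain ⟨v, hv, -⟩ := finrank_eq_one_iff'.1 hV
    exact ⟨v, by simpa using hv, ht v v.2⟩
  · rintro ⟨v, hv, ht⟩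
    refine ⟨𝕜 ∙ v, finrank_span_singleton hv, fun w hw => ?_⟩
    obtain ⟨c, rfl⟩ := Submodule.mem_span_singleton.1 hw
    rw [map_smul, norm_smul, norm_smul, mul_left_comm]
    exact mul_le_mul_of_nonneg_left ht (norm_nonneg c)

theorem sSup_finrank_eq_one_expand_eq_opNorm (T : E →L[𝕜] F) :
    sSup {t : ℝ | ∃ V : Submodule 𝕜 E, Module.finrank 𝕜 V = 1 ∧ ∀ v ∈ V, t * ‖v‖ ≤ ‖T v‖}
      = ‖T‖ := by
  simp only [exists_finrank_eq_one_expand_iff_exists_ne_zero]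
  set S := {t : ℝ | ∃ v : E, v ≠ 0 ∧ t * ‖v‖ ≤ ‖T v‖}
  have hub : ∀ t ∈ S, t ≤ ‖T‖ := by
    rintro t ⟨v, hv, ht⟩
    exact le_of_mul_le_mul_right (ht.trans (T.le_opNorm v)) (norm_pos_iff.2 hv)
  have hS_nonneg : 0 ≤ sSup S := by
    rcases S.eq_empty_or_nonempty with hS | ⟨-, v, hv, -⟩
    · rw [hS, Real.sSup_empty]
    · exact le_csSup ⟨_, hub⟩ ⟨v, hv, by simp⟩
  refine le_antisymm (Real.sSup_le hub (norm_nonneg T))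
    (T.opNorm_le_bound' hS_nonneg fun v hv => (div_le_iff₀ (by positivity)).1 ?_)
  exact le_csSup ⟨_, hub⟩ ⟨v, norm_ne_zero_iff.1 hv, (div_mul_cancel₀ _ hv).le⟩

theorem singVal_one_eq_norm_toEuclideanCLM {d : ℕ} (M : Matrix (Fin d) (Fin d) ℂ) :
    singVal 1 M = ‖Matrix.toEuclideanCLM (𝕜 := ℂ) M‖ :=
  sSup_finrank_eq_one_expand_eq_opNorm (Matrix.toEuclideanCLM (𝕜 := ℂ) M)

theorem singVal_one_smul_outerProduct {d : ℕ} {u v : EuclideanSpace ℂ (Fin d)} (hu : ‖u‖ = 1)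
    (hv : ‖v‖ = 1) (s : ℂ) : singVal 1 (s • outerProduct u v) = ‖s‖ := by
  rw [singVal_one_eq_norm_toEuclideanCLM, map_smul, toEuclideanCLM_outerProduct, norm_smul,
    InnerProductSpace.norm_rankOne, hu, hv, mul_one, mul_one]

end SingularValue

section Iterates

variable {d : ℕ} {α : ℝ} {A : ℝ → Matrix (Fin d) (Fin d) ℂ} {k : ℝ → ℂ}
  {u v : ℝ → EuclideanSpace ℂ (Fin d)}

theorem matIter_succ_eq_smul_outerProduct (hA : ∀ x, A x = k x • outerProduct (u x) (v x))
    (n : ℕ) (x : ℝ) :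
    matIter α A (n + 1) x =
      (k (x + n * α) * ∏ i ∈ Finset.range n, k (x + i * α) * ⟪v (x + i * α + α), u (x + i * α)⟫_ℂ) •
        outerProduct (u (x + n * α)) (v x) := by
  induction n generalizing x with
  | zero => simp [matIter, hA]
  | succ n ih =>
    have hshift (i : ℕ) : x + α + i * α = x + (i + 1 : ℕ) * α := by push_cast; ring
    rw [matIter, ih, hA, smul_mul_smul_comm, outerProduct_mul_outerProduct, smul_smul,
      Finset.prod_range_succ']
    simp only [hshift, Nat.cast_zero, zero_mul, add_zero, mul_assoc]

end Iterates

section LogMean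

theorem elogIntegral_eq_coe_integral {X : Type*} [MeasurableSpace X] {μ : Measure X} {g : X → ℝ}
    (hg₀ : ∀ᵐ x ∂μ, g x ≠ 0) (hg : Integrable (fun x => Real.log (g x)) μ) :
    elogIntegral μ g = (∫ x, Real.log (g x) ∂μ : ℝ) := by
  have hpos : ∫⁻ x, ENNReal.ofReal (Real.log (g x)) ∂μ ≠ ⊤ := hg.lintegral_lt_top.ne
  have hneg : ∫⁻ x, ENNReal.ofReal (-Real.log (g x)) ∂μ ≠ ⊤ := hg.neg.lintegral_lt_top.ne
  have hnull : μ {x | g x = 0} = 0 := by simpa [ae_iff] using hg₀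
  rw [elogIntegral, if_pos ⟨hnull, hneg⟩,
    integral_eq_lintegral_pos_part_sub_lintegral_neg_part hg, EReal.coe_sub,
    EReal.coe_ennreal_toReal hpos, EReal.coe_ennreal_toReal hneg]

/-- The mean of `log ‖f‖` over the circle, i.e. the logarithmic Mahler measure of `f`. -/
noncomputable def logMean {E : Type*} [NormedAddCommGroup E] (f : ℝ → E) : ℝ :=
  ∫ x in (0 : ℝ)..1, Real.log ‖f x‖

variable {E : Type*} [NormedAddCommGroup E]

theorem logMean_comp_add_const {f : ℝ → E} (hf : Function.Periodic f 1) (a : ℝ) :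
    logMean (fun x => f (x + a)) = logMean f := by
  have hlog : Function.Periodic (fun x => Real.log ‖f x‖) 1 := fun x => by simp only [hf x]
  simpa [logMean, intervalIntegral.integral_comp_add_right (fun x => Real.log ‖f x‖), add_comm a]
    using hlog.intervalIntegral_add_eq a 0

namespace PeriodicAnalytic

theorem intervalIntegrable_log_norm [NormedSpace ℝ E] {f : ℝ → E} (hf : PeriodicAnalytic f) :
    IntervalIntegrable (fun x => Real.log ‖f x‖) volume 0 1 :=
  MeromorphicOn.intervalIntegrable_log_norm fun x _ => (hf.analyticAt x).meromorphicAt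

theorem elogIntegral_norm [NormedSpace ℝ E] {f : ℝ → E} (hf : PeriodicAnalytic f) (hf₀ : f ≠ 0) :
    elogIntegral (volume.restrict (Set.Ioc (0 : ℝ) 1)) (fun x => ‖f x‖) = logMean f := by
  have hae : ∀ᵐ x, ‖f x‖ ≠ 0 := by
    simpa only [norm_ne_zero_iff] using ae_ne_zero_of_analytic hf.analyticOnNhd hf₀
  rw [elogIntegral_eq_coe_integral (ae_restrict_of_ae hae)
    ((intervalIntegrable_iff_integrableOn_Ioc_of_le zero_le_one).1 hf.intervalIntegrable_log_norm),
    logMean, intervalIntegral.integral_of_le zero_le_one]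

variable {𝕜 : Type*} [NormedField 𝕜] [NormedAlgebra ℝ 𝕜] {f g : ℝ → 𝕜}

theorem mul_ne_zero (hf : PeriodicAnalytic f) (hf₀ : f ≠ 0) (hg : PeriodicAnalytic g)
    (hg₀ : g ≠ 0) : (fun x => f x * g x) ≠ 0 := fun h => by
  rcases hf.analyticOnNhd.eq_zero_or_eq_zero_of_mul_eq_zero hg.analyticOnNhd
    (fun x _ => congrFun h x) isPreconnected_univ with hf' | hg'
  · exact hf₀ (funext fun x => hf' x trivial)
  · exact hg₀ (funext fun x => hg' x trivial)

theorem prod_ne_zero {ι : Type*} {s : Finset ι} {f : ι → ℝ → 𝕜}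
    (hf : ∀ i ∈ s, PeriodicAnalytic (f i)) (hf₀ : ∀ i ∈ s, f i ≠ 0) :
    (fun x => ∏ i ∈ s, f i x) ≠ 0 := by
  rw [← Finset.prod_fn]
  exact (Finset.prod_induction f (fun g => PeriodicAnalytic g ∧ g ≠ 0)
    (fun _ _ hf hg => ⟨hf.1.mul hg.1, hf.1.mul_ne_zero hf.2 hg.1 hg.2⟩)
    ⟨.const 1, one_ne_zero⟩ fun i hi => ⟨hf i hi, hf₀ i hi⟩).2

theorem logMean_mul (hf : PeriodicAnalytic f) (hf₀ : f ≠ 0) (hg : PeriodicAnalytic g)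
    (hg₀ : g ≠ 0) : logMean (fun x => f x * g x) = logMean f + logMean g := by
  rw [logMean, logMean, logMean, ← intervalIntegral.integral_add hf.intervalIntegrable_log_norm
    hg.intervalIntegrable_log_norm]
  refine intervalIntegral.integral_congr_ae ?_
  filter_upwards [ae_ne_zero_of_analytic hf.analyticOnNhd hf₀,
    ae_ne_zero_of_analytic hg.analyticOnNhd hg₀] with x hfx hgx _
  rw [norm_mul, Real.log_mul (norm_ne_zero_iff.2 hfx) (norm_ne_zero_iff.2 hgx)]

theorem logMean_prod {ι : Type*} {s : Finset ι} {f : ι → ℝ → 𝕜}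
    (hf : ∀ i ∈ s, PeriodicAnalytic (f i)) (hf₀ : ∀ i ∈ s, f i ≠ 0) :
    logMean (fun x => ∏ i ∈ s, f i x) = ∑ i ∈ s, logMean (f i) := by
  classical
  induction s using Finset.induction_on with
  | empty => simp [logMean]
  | insert a s ha ih =>
    rw [Finset.forall_mem_insert] at hf hf₀
    simp only [Finset.prod_insert ha, Finset.sum_insert ha]
    rw [hf.1.logMean_mul hf₀.1 (.prod hf.2) (prod_ne_zero hf.2 hf₀.2), ih hf.2 hf₀.2]

end PeriodicAnalytic

end LogMean

section LyapunovExponent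

variable {d : ℕ} {α : ℝ} {A : ℝ → Matrix (Fin d) (Fin d) ℂ} {k : ℝ → ℂ}
  {u v : ℝ → EuclideanSpace ℂ (Fin d)}

theorem comp_add_const_ne_zero {G M : Type*} [AddGroup G] [Zero M] {f : G → M} (hf₀ : f ≠ 0)
    (a : G) : (fun x => f (x + a)) ≠ 0 := fun h =>
  hf₀ (funext fun x => by simpa using congrFun h (x - a))

theorem elogIntegral_singVal_matIter (hk : PeriodicAnalytic k) (hk₀ : k ≠ 0)
    (hu : PeriodicAnalytic u) (hv : PeriodicAnalytic v) (hu₁ : ∀ x, ‖u x‖ = 1)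
    (hv₁ : ∀ x, ‖v x‖ = 1) (hA : ∀ x, A x = k x • outerProduct (u x) (v x))
    (hvu : (fun x => ⟪v (x + α), u x⟫_ℂ) ≠ 0) (n : ℕ) :
    elogIntegral (volume.restrict (Set.Ioc (0 : ℝ) 1)) (fun x => singVal 1 (matIter α A (n + 1) x))
      = (logMean k + n * logMean (fun x => k x * ⟪v (x + α), u x⟫_ℂ) : ℝ) := by
  set h : ℝ → ℂ := fun x => k x * ⟪v (x + α), u x⟫_ℂ
  have hinner : PeriodicAnalytic fun x => ⟪v (x + α), u x⟫_ℂ := (hv.comp_add_const α).inner hu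
  have hh : PeriodicAnalytic h := hk.mul hinner
  have hh₀ : h ≠ 0 := hk.mul_ne_zero hk₀ hinner hvu
  have hkn := hk.comp_add_const (n * α)
  have hkn₀ := comp_add_const_ne_zero hk₀ (n * α)
  have hhi : ∀ i ∈ Finset.range n, PeriodicAnalytic fun x => h (x + i * α) :=
    fun i _ => hh.comp_add_const (i * α)
  have hhi₀ : ∀ i ∈ Finset.range n, (fun x => h (x + i * α)) ≠ 0 :=
    fun i _ => comp_add_const_ne_zero hh₀ (i * α)
  have hP := PeriodicAnalytic.prod hhi
  have hP₀ := PeriodicAnalytic.prod_ne_zero hhi hhi₀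
  simp only [matIter_succ_eq_smul_outerProduct hA, singVal_one_smul_outerProduct (hu₁ _) (hv₁ _)]
  rw [(hkn.mul hP).elogIntegral_norm (hkn.mul_ne_zero hkn₀ hP hP₀),
    hkn.logMean_mul hkn₀ hP hP₀, PeriodicAnalytic.logMean_prod hhi hhi₀]
  simp [logMean_comp_add_const hk.periodic, logMean_comp_add_const hh.periodic]

theorem tendsto_inv_succ_mul_add_nat_mul (a b : ℝ) :
    Tendsto (fun n : ℕ => ((n + 1 : ℕ) : ℝ)⁻¹ * (a + n * b)) atTop (𝓝 b) := by
  have h := (tendsto_one_div_add_atTop_nhds_zero_nat (𝕜 := ℝ)).const_mul (a - b) |>.const_add b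
  rw [mul_zero, add_zero] at h
  refine h.congr fun n => ?_
  push_cast
  field_simp
  ring

theorem hasLyapunovExp_one_of_eq_smul_outerProduct (hk : PeriodicAnalytic k) (hk₀ : k ≠ 0)
    (hu : PeriodicAnalytic u) (hv : PeriodicAnalytic v) (hu₁ : ∀ x, ‖u x‖ = 1)
    (hv₁ : ∀ x, ‖v x‖ = 1) (hA : ∀ x, A x = k x • outerProduct (u x) (v x))
    (hvu : (fun x => ⟪v (x + α), u x⟫_ℂ) ≠ 0) :
    HasLyapunovExp α A 1 (logMean fun x => k x * ⟪v (x + α), u x⟫_ℂ) := by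
  rw [HasLyapunovExp, ← tendsto_add_atTop_iff_nat 1]
  simp only [elogIntegral_singVal_matIter hk hk₀ hu hv hu₁ hv₁ hA hvu, ← EReal.coe_mul]
  exact (continuous_coe_real_ereal.tendsto _).comp (tendsto_inv_succ_mul_add_nat_mul _ _)

theorem inner_eq_zero_of_hasLyapunovExp_bot (hk : PeriodicAnalytic k) (hk₀ : k ≠ 0)
    (hu : PeriodicAnalytic u) (hv : PeriodicAnalytic v) (hu₁ : ∀ x, ‖u x‖ = 1)
    (hv₁ : ∀ x, ‖v x‖ = 1) (hA : ∀ x, A x = k x • outerProduct (u x) (v x))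
    (hL : HasLyapunovExp α A 1 ⊥) (x : ℝ) : ⟪v (x + α), u x⟫_ℂ = 0 := by
  by_contra hx
  have hvu : (fun x => ⟪v (x + α), u x⟫_ℂ) ≠ 0 := fun h => hx (congrFun h x)
  exact EReal.coe_ne_bot _ (tendsto_nhds_unique
    (hasLyapunovExp_one_of_eq_smul_outerProduct hk hk₀ hu hv hu₁ hv₁ hA hvu) hL)

end LyapunovExponent

section OrthonormalExtension

variable {ι E : Type*} [NormedAddCommGroup E] [InnerProductSpace ℂ E]

theorem orthonormal_update_insert [DecidableEq ι] {s : Finset ι} {a : ι} (ha : a ∉ s) {w : ι → E}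
    {e : E} (hw : Orthonormal ℂ fun i : s => w i) (he : ‖e‖ = 1) (hwe : ∀ i ∈ s, ⟪w i, e⟫_ℂ = 0) :
    Orthonormal ℂ fun i : (insert a s : Finset ι) => Function.update w a e i := by
  have hne {i} (hi : i ∈ s) : i ≠ a := fun h => ha (h ▸ hi)
  refine ⟨fun ⟨i, hi⟩ => ?_, fun ⟨i, hi⟩ ⟨j, hj⟩ hij => ?_⟩
  · obtain rfl | his := Finset.mem_insert.1 hi
    · simpa using he
    · simpa [hne his] using hw.1 ⟨i, his⟩
  · obtain rfl | his := Finset.mem_insert.1 hi <;> obtain rfl | hjs := Finset.mem_insert.1 hj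
    · exact absurd rfl hij
    · simpa [hne hjs] using inner_eq_zero_symm.1 (hwe j hjs)
    · simpa [hne his] using hwe i his
    · simpa [hne his, hne hjs] using hw.2 (i := ⟨i, his⟩) (j := ⟨j, hjs⟩) (by simpa using hij)

theorem exists_ne_zero_forall_inner_eq_zero [Fintype ι] (w : ι → E)
    (hcard : Fintype.card ι < Module.finrank ℂ E) : ∃ z : E, z ≠ 0 ∧ ∀ i, ⟪w i, z⟫_ℂ = 0 := by
  have : FiniteDimensional ℂ E := Module.finite_of_finrank_pos (Nat.zero_lt_of_lt hcard)
  let S := Submodule.span ℂ (Set.range w)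
  have hS : S ≠ ⊤ := fun h => by
    have hrange : Module.finrank ℂ S ≤ Fintype.card ι := finrank_range_le_card w
    rw [h, finrank_top] at hrange
    omega
  obtain ⟨z, hz, hz₀⟩ := Submodule.exists_mem_ne_zero_of_ne_bot
    (mt Submodule.orthogonal_eq_bot_iff.1 hS)
  exact ⟨z, hz₀, fun i => hz _ (Submodule.subset_span ⟨i, rfl⟩)⟩

namespace PeriodicAnalytic

theorem exists_unit_forall_inner_eq_zero [Fintype ι] {w : ι → ℝ → E}
    (hw : ∀ i, PeriodicAnalytic (w i)) (ho : ∀ x, Orthonormal ℂ fun i => w i x)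
    (hcard : Fintype.card ι < Module.finrank ℂ E) :
    ∃ f : ℝ → E, PeriodicAnalytic f ∧ (∀ x, ‖f x‖ = 1) ∧ ∀ i x, ⟪w i x, f x⟫_ℂ = 0 := by
  have : FiniteDimensional ℂ E := Module.finite_of_finrank_pos (Nat.zero_lt_of_lt hcard)
  have := FiniteDimensional.complete ℂ E
  obtain ⟨z, hz₀, hz⟩ := exists_ne_zero_forall_inner_eq_zero (fun i => w i 0) hcard
  -- `g` may vanish away from `0`: dividing out its zeros keeps it orthogonal to the `w i`.
  let g : ℝ → E := fun x => z - ∑ i, ⟪w i x, z⟫_ℂ • w i x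
  have hg : PeriodicAnalytic g :=
    (const z).sub (.sum fun i _ => ((hw i).inner (const z)).smul (hw i))
  have hg₀ : g ≠ 0 := fun h => hz₀ (by simpa [g, hz] using congrFun h 0)
  have hwg (i x) : ⟪w i x, g x⟫_ℂ = 0 := by
    rw [inner_sub_right, (ho x).inner_right_fintype, sub_self]
  obtain ⟨k, f, hk, hf, hk₀, hf₁, hgf⟩ := hg.exists_eq_smul_unit hg₀
  refine ⟨f, hf, hf₁, fun i x => congrFun (smul_left_cancel_of_analytic hk.analyticOnNhd hk₀
    ((hw i).inner hf).analyticOnNhd (const 0).analyticOnNhd fun y => ?_) x⟩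
  rw [smul_eq_mul, ← inner_smul_right, ← hgf, hwg, smul_zero]

end PeriodicAnalytic

theorem exists_periodicAnalytic_orthonormal_extension [Fintype ι]
    (hcard : Module.finrank ℂ E = Fintype.card ι) (s : Finset ι) (w : ι → ℝ → E)
    (hw : ∀ i ∈ s, PeriodicAnalytic (w i)) (ho : ∀ x, Orthonormal ℂ fun i : s => w i x) :
    ∃ w' : ι → ℝ → E, (∀ i ∈ s, w' i = w i) ∧ (∀ i, PeriodicAnalytic (w' i)) ∧
      ∀ x, Orthonormal ℂ fun i => w' i x := by
  classical
  obtain rfl | hs := eq_or_ne s Finset.univ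
  · exact ⟨w, fun _ _ => rfl, fun i => hw i (Finset.mem_univ i), fun x =>
      (ho x).comp (fun i => ⟨i, Finset.mem_univ i⟩) fun _ _ h => congrArg Subtype.val h⟩
  have hlt : s.card < Fintype.card ι := (Finset.card_lt_iff_ne_univ s).2 hs
  obtain ⟨a, ha⟩ : ∃ a, a ∉ s := by simpa [Finset.eq_univ_iff_forall] using hs
  obtain ⟨f, hf, hf₁, hwf⟩ := PeriodicAnalytic.exists_unit_forall_inner_eq_zero
    (fun i : s => hw i i.2) ho (by simpa [hcard] using hlt)
  obtain ⟨w', hw'w, hw', ho'⟩ := exists_periodicAnalytic_orthonormal_extension hcard (insert a s)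
    (Function.update w a f)
    (fun i hi => by
      obtain rfl | his := Finset.mem_insert.1 hi
      · simpa using hf
      · simpa [ne_of_mem_of_not_mem his ha] using hw i his)
    fun x => by
      simpa only [Function.apply_update fun _ (g : ℝ → E) => g x] using
        orthonormal_update_insert ha (ho x) (hf₁ x) fun i hi => hwf ⟨i, hi⟩ x
  refine ⟨w', fun i hi => ?_, hw', ho'⟩
  rw [hw'w i (Finset.mem_insert_of_mem hi),
    Function.update_of_ne (ne_of_mem_of_not_mem hi ha)]
termination_by Fintype.card ι - s.card
decreasing_by classical rw [Finset.card_insert_of_notMem ha]; omega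

theorem exists_periodicAnalytic_orthonormal_extension_pair [Fintype ι]
    (hcard : Module.finrank ℂ E = Fintype.card ι) {p q : ι} (hpq : p ≠ q) {f g : ℝ → E}
    (hf : PeriodicAnalytic f) (hg : PeriodicAnalytic g) (hf₁ : ∀ x, ‖f x‖ = 1)
    (hg₁ : ∀ x, ‖g x‖ = 1) (hfg : ∀ x, ⟪f x, g x⟫_ℂ = 0) :
    ∃ w : ι → ℝ → E, w p = f ∧ w q = g ∧ (∀ i, PeriodicAnalytic (w i)) ∧
      ∀ x, Orthonormal ℂ fun i => w i x := by
  classical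
  have hg_orthonormal (x : ℝ) : Orthonormal ℂ fun _ : ({q} : Finset ι) => g x :=
    ⟨fun _ => hg₁ x, fun i j hij => absurd (Subsingleton.elim i j) hij⟩
  obtain ⟨w, hw_eq, hw, hwo⟩ := exists_periodicAnalytic_orthonormal_extension hcard {p, q}
    (Function.update (fun _ => g) p f) (by simp [hpq.symm, hf, hg]) fun x => by
      simpa only [Function.apply_update fun _ (h : ℝ → E) => h x] using
        orthonormal_update_insert (by simpa using hpq) (hg_orthonormal x) (hf₁ x)
          fun _ _ => inner_eq_zero_symm.1 (hfg x)
  exact ⟨w, by simpa using hw_eq p (by simp), by simpa [hpq.symm] using hw_eq q (by simp), hw, hwo⟩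

end OrthonormalExtension

section UnitaryConjugation

open Matrix

variable {n : Type*} [Fintype n]

/-- The matrix whose columns are the vectors `w j`. -/
def matrixOfColumns (w : n → EuclideanSpace ℂ n) : Matrix n n ℂ :=
  of fun i j => w j i

theorem star_matrixOfColumns_mulVec_apply (w : n → EuclideanSpace ℂ n) (v : EuclideanSpace ℂ n)
    (i : n) : (star (matrixOfColumns w) *ᵥ v.ofLp) i = ⟪w i, v⟫_ℂ := by
  rw [EuclideanSpace.inner_eq_star_dotProduct, dotProduct_comm]
  rfl

theorem star_vecMul_matrixOfColumns_apply (w : n → EuclideanSpace ℂ n) (v : EuclideanSpace ℂ n)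
    (j : n) : (star v.ofLp ᵥ* matrixOfColumns w) j = ⟪v, w j⟫_ℂ := by
  rw [EuclideanSpace.inner_eq_star_dotProduct, dotProduct_comm]
  rfl

variable [DecidableEq n]

theorem matrixOfColumns_mem_unitaryGroup {w : n → EuclideanSpace ℂ n} (hw : Orthonormal ℂ w) :
    matrixOfColumns w ∈ unitaryGroup n ℂ := by
  rw [mem_unitaryGroup_iff']
  ext i j
  rw [one_apply, ← orthonormal_iff_ite.1 hw i j, ← star_matrixOfColumns_mulVec_apply]
  rfl

theorem star_matrixOfColumns_mul_outerProduct_mul {w w' : n → EuclideanSpace ℂ n}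
    (hw : Orthonormal ℂ w) (hw' : Orthonormal ℂ w') (p q : n) :
    star (matrixOfColumns w) * outerProduct (w p) (w' q) * matrixOfColumns w' = single p q 1 := by
  have hleft : star (matrixOfColumns w) *ᵥ (w p).ofLp = Pi.single p 1 := by
    ext i
    rw [star_matrixOfColumns_mulVec_apply, orthonormal_iff_ite.1 hw, Pi.single_apply]
  have hright : star (w' q).ofLp ᵥ* matrixOfColumns w' = Pi.single q 1 := by
    ext j
    simp only [star_vecMul_matrixOfColumns_apply, orthonormal_iff_ite.1 hw', Pi.single_apply,
      eq_comm]
  rw [outerProduct, mul_vecMulVec, vecMulVec_mul, hleft, hright, single_eq_single_vecMulVec_single]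

theorem exists_unitary_star_mul_outerProduct_mul_eq_single
    {u v : ℝ → EuclideanSpace ℂ n} (hu : PeriodicAnalytic u) (hv : PeriodicAnalytic v)
    (hu₁ : ∀ x, ‖u x‖ = 1) (hv₁ : ∀ x, ‖v x‖ = 1) {α : ℝ}
    (hvu : ∀ x, ⟪v (x + α), u x⟫_ℂ = 0) {p q : n} (hpq : p ≠ q) :
    ∃ U : ℝ → Matrix n n ℂ, (∀ i j, PeriodicAnalytic fun x => U x i j) ∧
      (∀ x, U x ∈ Matrix.unitaryGroup n ℂ) ∧
      ∀ x, star (U (x + α)) * outerProduct (u x) (v x) * U x = Matrix.single p q 1 := by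
  have huv (x : ℝ) : ⟪u (x + -α), v x⟫_ℂ = 0 :=
    inner_eq_zero_symm.1 (by simpa using hvu (x + -α))
  have hcard : Module.finrank ℂ (EuclideanSpace ℂ n) = Fintype.card n := finrank_euclideanSpace
  obtain ⟨w, hwp, hwq, hw, ho⟩ := exists_periodicAnalytic_orthonormal_extension_pair hcard hpq
    (hu.comp_add_const (-α)) hv (fun x => hu₁ (x + -α)) hv₁ huv
  have hU (i j : n) : PeriodicAnalytic fun x => matrixOfColumns (w · x) i j := by
    simpa only [matrixOfColumns, Matrix.of_apply] using PeriodicAnalytic.euclidean_iff.1 (hw j) i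
  refine ⟨fun x => matrixOfColumns (w · x), hU,
    fun x => matrixOfColumns_mem_unitaryGroup (ho x), fun x => ?_⟩
  simpa [hwp, hwq] using star_matrixOfColumns_mul_outerProduct_mul (ho (x + α)) (ho x) p q

end UnitaryConjugation

/-- If `A` is analytic, 1-periodic, of rank at most one everywhere, and
`L₁(α,A) = -∞`, then there are an analytic 1-periodic function `c` and an analytic
1-periodic unitary `U` such that `U(x+α)* A(x) U(x)` has `c(x)` in position `(d-1, d)`
(1-indexed) and zeros elsewhere, i.e. it is the direct sum of a zero block and the `2×2`
block `[[0, c(x)], [0, 0]]`. -/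
theorem stmt_7 {d : ℕ} (hd : 2 ≤ d) (α : ℝ) (A : ℝ → Matrix (Fin d) (Fin d) ℂ)
    (hA : AnalyticPeriodicMat A)
    (hrank : ∀ x : ℝ, (A x).rank ≤ 1)
    (hL1 : HasLyapunovExp α A 1 ⊥) :
    ∃ (c : ℝ → ℂ) (U : ℝ → Matrix (Fin d) (Fin d) ℂ),
      Function.Periodic c 1 ∧ (∀ x : ℝ, AnalyticAt ℝ c x) ∧
      AnalyticPeriodicMat U ∧
      (∀ x : ℝ, U x ∈ Matrix.unitaryGroup (Fin d) ℂ) ∧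
      ∀ (x : ℝ) (i j : Fin d),
        (star (U (x + α)) * A x * U x) i j
          = if (i : ℕ) = d - 2 ∧ (j : ℕ) = d - 1 then c x else 0 := by
  by_cases hA₀ : A = 0
  · exact ⟨0, 1, fun _ => rfl, fun _ => analyticAt_const,
      ⟨fun _ => rfl, fun _ _ _ => analyticAt_const⟩, fun _ => one_mem _, by simp [hA₀]⟩
  obtain ⟨k, u, v, hk, hu, hv, hk₀, hu₁, hv₁, hAuv⟩ :=
    PeriodicAnalytic.exists_eq_smul_outerProduct_of_rank_le_one (analyticPeriodicMat_iff.1 hA)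
      hrank hA₀
  have hvu := inner_eq_zero_of_hasLyapunovExp_bot hk hk₀ hu hv hu₁ hv₁ hAuv hL1
  let p : Fin d := ⟨d - 2, by omega⟩
  let q : Fin d := ⟨d - 1, by omega⟩
  have hpq : p ≠ q := by simp only [p, q, ne_eq, Fin.mk.injEq]; omega
  obtain ⟨U, hU, hU_mem, hU_conj⟩ :=
    exists_unitary_star_mul_outerProduct_mul_eq_single hu hv hu₁ hv₁ hvu hpq
  refine ⟨k, U, hk.periodic, hk.analyticAt, analyticPeriodicMat_iff.2 hU, hU_mem, fun x i j => ?_⟩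
  rw [hAuv, Matrix.mul_smul, Matrix.smul_mul, hU_conj]
  simp [Matrix.single_apply, p, q, Fin.ext_iff, eq_comm]
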